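/- Let N ∈ ℕ, N ≥ 1, γ ∈ ℝ, and let A : ℂ^{2N} → ℂ^{2N} be the linear map defined by (Aψ)_n = ψ_{n+1} + ψ_{n−1} + iγ(−1)^n ψ_n for 2 ≤ n ≤ 2N−1, (Aψ)_1 = ψ_2 − iγψ_1, and (Aψ)_{2N} = ψ_{2N−1} + iγψ_{2N}. Then the eigenvalues of A are exactly the 2N numbers ±(4 cos²(πj/(1 + 2N)) − γ²)^{1/2} for 1 ≤ j ≤ N, and if |γ| < 2 cos(πN/(1 + 2N)) then all these eigenvalues are real and simple. -/

import Mathlib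

/-!
The eigenvalue equation `A ψ = μ ψ` is the three-term recurrence
`ψ_{m+1} = (μ - iγ(-1)^m) ψ_m - ψ_{m-1}` with `ψ_0 = ψ_{2N+1} = 0`. Every solution with `ψ_0 = 0`
is `ψ_1` times the normalised solution `dsSol`, so eigenspaces are at most one-dimensional
(`dsExt_eq_mul_dsSol`), and `μ` is an eigenvalue iff `dsSol (2N+1) = 0` (`eigen_iff_dsSol`).

Two consecutive coefficients multiply to `μ² + γ²`, so the odd-indexed values satisfy
`s_{2k+5} = (μ² + γ² - 2) s_{2k+3} - s_{2k+1}`. Writing `μ² + γ² = 4 cos² θ` with `θ ∈ ℂ` gives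
`s_{2k+1} sin θ = sin ((2k+1)θ)`. When `sin θ = 0` one has `s_{2k+1} = 2k+1 ≠ 0`; otherwise
`s_{2N+1}` vanishes iff `(2N+1)θ ∈ πℤ`, i.e. iff `μ² + γ² = 4 cos² (πj/(2N+1))` for some
`1 ≤ j ≤ N` (`dsSol_eq_zero_iff`). Under the bound on `γ` every such `μ²` is a positive real, because
the cosine decreases on `[0, π]`, and hence `μ` is real.
-/

open Real

/-- Extension of a vector `ψ ∈ ℂ^{2N}` (indexed `1, …, 2N` in the paper, here `0, …, 2N-1`)
by zero to all paper-indices `m ∈ ℕ`:  `dsExt N ψ m = ψ_m` if `1 ≤ m ≤ 2N`, else `0`. -/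
def dsExt (N : ℕ) (ψ : Fin (2*N) → ℂ) (m : ℕ) : ℂ :=
  if h : 1 ≤ m ∧ m ≤ 2*N then ψ ⟨m - 1, by omega⟩ else 0

/-- The number `(4 cos²(πj/(1+2N)) - γ²)^{1/2}`, with the square root taken in `ℂ`
(so that it is purely imaginary when the radicand is negative). -/
noncomputable def dsEig (N : ℕ) (γ : ℝ) (j : ℕ) : ℂ :=
  (((4 * Real.cos (Real.pi * j / (1 + 2*N)) ^ 2 - γ^2 : ℝ) : ℂ)) ^ ((1 : ℂ)/2)

/-- The solution of `s_{m+1} = (μ - iγ(-1)^m) s_m - s_{m-1}` normalised by `s_0 = 0`, `s_1 = 1`. -/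
noncomputable def dsSol (γ : ℝ) (μ : ℂ) : ℕ → ℂ
  | 0 => 0
  | 1 => 1
  | (m + 2) => (μ - Complex.I * γ * (-1) ^ (m + 1)) * dsSol γ μ (m + 1) - dsSol γ μ m

theorem dsSol_step (γ : ℝ) (μ : ℂ) (m : ℕ) :
    dsSol γ μ (m + 2)
      = (μ - Complex.I * γ * (-1) ^ (m + 1)) * dsSol γ μ (m + 1) - dsSol γ μ m := by
  rw [dsSol]

/-- Eliminating the even-indexed values; the coefficient comes from
`(μ + iγ)(μ - iγ) = μ² + γ²`. -/
theorem dsSol_odd (γ : ℝ) (μ : ℂ) (k : ℕ) :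
    dsSol γ μ (2 * k + 5)
      = (μ ^ 2 + (γ : ℂ) ^ 2 - 2) * dsSol γ μ (2 * k + 3) - dsSol γ μ (2 * k + 1) := by
  have h1 := dsSol_step γ μ (2 * k + 1)
  have h2 := dsSol_step γ μ (2 * k + 2)
  have h3 := dsSol_step γ μ (2 * k + 3)
  have e : ((-1 : ℂ)) ^ (2 * k) = 1 := by simp [pow_mul]
  simp only [add_assoc, Nat.reduceAdd, pow_add, e] at h1 h2 h3
  norm_num at h1 h2 h3
  linear_combination h3 + (μ - Complex.I * γ) * h2 + h1
    - γ ^ 2 * dsSol γ μ (2 * k + 3) * Complex.I_sq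

/-- The odd-indexed values are Chebyshev polynomials of the second kind in `cos θ`. Two consecutive
values are carried because `dsSol_odd` has order two. -/
theorem dsSol_mul_sin (γ : ℝ) (μ θ : ℂ) (h : μ ^ 2 + (γ : ℂ) ^ 2 = 4 * Complex.cos θ ^ 2) (k : ℕ) :
    dsSol γ μ (2 * k + 1) * Complex.sin θ = Complex.sin ((2 * k + 1) * θ) ∧
    dsSol γ μ (2 * k + 3) * Complex.sin θ = Complex.sin ((2 * k + 3) * θ) := by
  induction k with
  | zero =>
    refine ⟨by simp [dsSol], ?_⟩
    norm_num [Complex.sin_three_mul]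
    norm_num [dsSol]
    linear_combination Complex.sin θ * h - γ ^ 2 * Complex.sin θ * Complex.I_sq
      + 4 * Complex.sin θ * Complex.sin_sq_add_cos_sq θ
  | succ k ih =>
    obtain ⟨i1, i2⟩ := ih
    have e1 : 2 * (k + 1) + 1 = 2 * k + 3 := by ring
    have e2 : 2 * (k + 1) + 3 = 2 * k + 5 := by ring
    rw [e1, e2, dsSol_odd]
    push_cast
    have f1 : (2 * ((k : ℂ) + 1) + 1) * θ = (2 * k + 3) * θ := by ring
    have f2 : (2 * ((k : ℂ) + 1) + 3) * θ = (2 * k + 3) * θ + 2 * θ := by ring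
    have f3 : (2 * (k : ℂ) + 1) * θ = (2 * k + 3) * θ - 2 * θ := by ring
    rw [f3, Complex.sin_sub, Complex.cos_two_mul] at i1
    rw [f1, f2, Complex.sin_add, Complex.cos_two_mul]
    refine ⟨i2, ?_⟩
    linear_combination (μ ^ 2 + (γ : ℂ) ^ 2 - 2) * i2 - i1
      + Complex.sin ((2 * k + 3) * θ) * h

/-- The degenerate case `sin θ = 0` of `dsSol_mul_sin`. -/
theorem dsSol_of_four (γ : ℝ) (μ : ℂ) (h : μ ^ 2 + (γ : ℂ) ^ 2 = 4) (k : ℕ) :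
    dsSol γ μ (2 * k + 1) = 2 * k + 1 ∧ dsSol γ μ (2 * k + 3) = 2 * k + 3 := by
  induction k with
  | zero =>
    norm_num [dsSol]
    linear_combination h - γ ^ 2 * Complex.I_sq
  | succ k ih =>
    obtain ⟨i1, i2⟩ := ih
    have e1 : 2 * (k + 1) + 1 = 2 * k + 3 := by ring
    have e2 : 2 * (k + 1) + 3 = 2 * k + 5 := by ring
    rw [e1, e2, dsSol_odd, i1, i2, h]
    push_cast
    constructor <;> ring

/-- Reduction of the integer `k` modulo `2N+1` and modulo sign into `{1, …, N}`; the condition on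
the sine excludes the multiples of `2N+1`. -/
theorem exists_cos_sq_eq (N : ℕ) (k : ℤ) (hs : Real.sin (k * π / (1 + 2 * N)) ≠ 0) :
    ∃ j : ℕ, 1 ≤ j ∧ j ≤ N ∧
      Real.cos (k * π / (1 + 2 * N)) ^ 2 = Real.cos (π * j / (1 + 2 * N)) ^ 2 := by
  have hM : (1 + 2 * (N : ℝ)) ≠ 0 := by positivity
  have hMz : (0 : ℤ) < 1 + 2 * N := by positivity
  obtain ⟨q, r, hr0, hr1, hk⟩ : ∃ q r : ℤ, 0 ≤ r ∧ r < 1 + 2 * N ∧ k = r + q * (1 + 2 * N) :=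
    ⟨k / (1 + 2 * N), k % (1 + 2 * N), Int.emod_nonneg _ hMz.ne', Int.emod_lt_of_pos _ hMz, by
      linarith [Int.emod_add_mul_ediv k (1 + 2 * N), mul_comm (1 + 2 * (N : ℤ)) (k / (1 + 2 * N))]⟩
  have hkr : (k : ℝ) * π / (1 + 2 * N) = r * π / (1 + 2 * N) + q * π := by
    rw [hk]; push_cast; field_simp
  have hc : Real.cos (k * π / (1 + 2 * N)) ^ 2 = Real.cos (r * π / (1 + 2 * N)) ^ 2 := by
    rw [hkr, Real.cos_add_int_mul_pi, mul_pow, ← zpow_natCast, ← zpow_mul, mul_comm q,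
      zpow_mul]
    simp
  have hr : r ≠ 0 := by
    rintro rfl
    apply hs
    rw [hkr]
    simp [Real.sin_int_mul_pi]
  lift r to ℕ using hr0
  rcases le_or_gt r N with h | h
  · refine ⟨r, by omega, h, ?_⟩
    rw [hc, mul_comm π]; norm_cast
  · refine ⟨1 + 2 * N - r, by omega, by omega, ?_⟩
    have : π * ((1 + 2 * N - r : ℕ) : ℝ) / (1 + 2 * N) = π - r * π / (1 + 2 * N) := by
      rw [Nat.cast_sub (by omega)]
      push_cast
      field_simp
    rw [hc, this, Real.cos_pi_sub, neg_sq]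
    norm_cast

theorem dsSol_eq_zero_iff (N : ℕ) (γ : ℝ) (μ : ℂ) :
    dsSol γ μ (2 * N + 1) = 0 ↔ ∃ j : ℕ, 1 ≤ j ∧ j ≤ N ∧
      μ ^ 2 = ((4 * Real.cos (π * j / (1 + 2 * N)) ^ 2 - γ ^ 2 : ℝ) : ℂ) := by
  have hM : (1 + 2 * (N : ℝ)) ≠ 0 := by positivity
  have hMC : (2 * (N : ℂ) + 1) ≠ 0 := by exact_mod_cast (Nat.succ_ne_zero (2 * N))
  constructor
  · intro h0
    obtain ⟨z, hz⟩ := IsAlgClosed.exists_pow_nat_eq (μ ^ 2 + (γ : ℂ) ^ 2) (n := 2) (by norm_num)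
    obtain ⟨θ, hθ⟩ := Complex.cos_surjective (z / 2)
    have h4 : μ ^ 2 + (γ : ℂ) ^ 2 = 4 * Complex.cos θ ^ 2 := by
      rw [hθ, ← hz]; ring
    have hsθ : Complex.sin θ ≠ 0 := by
      intro hs
      have hc := Complex.sin_sq_add_cos_sq θ
      rw [hs] at hc
      have := (dsSol_of_four γ μ (by linear_combination h4 + 4 * hc) N).1
      exact hMC (this.symm.trans h0)
    have h := (dsSol_mul_sin γ μ θ h4 N).1
    rw [h0, zero_mul, eq_comm, Complex.sin_eq_zero_iff] at h
    obtain ⟨k, hk⟩ := h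
    have hθ' : θ = ((k * π / (1 + 2 * N) : ℝ) : ℂ) := by
      push_cast
      rw [add_comm, eq_div_iff hMC, mul_comm, hk]
    rw [hθ'] at hsθ h4
    obtain ⟨j, h1, h2, h3⟩ := exists_cos_sq_eq N k (by exact_mod_cast hsθ)
    refine ⟨j, h1, h2, ?_⟩
    rw [← h3]
    push_cast at h4 ⊢
    linear_combination h4
  · rintro ⟨j, hj1, hjN, hμ⟩
    set t : ℝ := π * j / (1 + 2 * N) with ht
    have h4 : μ ^ 2 + (γ : ℂ) ^ 2 = 4 * Complex.cos (t : ℂ) ^ 2 := by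
      rw [hμ]; push_cast; ring
    have hs : Real.sin t ≠ 0 := by
      have hj : (1 : ℝ) ≤ j := by exact_mod_cast hj1
      have hj' : (j : ℝ) ≤ N := by exact_mod_cast hjN
      refine (Real.sin_pos_of_pos_of_lt_pi (by positivity) ?_).ne'
      rw [ht, div_lt_iff₀ (by positivity)]
      nlinarith [Real.pi_pos]
    have hsC : Complex.sin (t : ℂ) ≠ 0 := by exact_mod_cast hs
    have h := (dsSol_mul_sin γ μ t h4 N).1
    have e : (2 * (N : ℂ) + 1) * (t : ℂ) = j * π := by
      have : (2 * (N : ℝ) + 1) * t = j * π := by rw [ht]; field_simp; ring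
      exact_mod_cast this
    rw [e, Complex.sin_nat_mul_pi] at h
    exact (mul_eq_zero.1 h).resolve_right hsC

theorem dsExt_succ (N : ℕ) (ψ : Fin (2 * N) → ℂ) (n : Fin (2 * N)) :
    dsExt N ψ ((n : ℕ) + 1) = ψ n := by
  have := n.2
  simp only [dsExt]
  rw [dif_pos ⟨by omega, by omega⟩]
  rfl

/-- An eigenvector, extended by zero, is a multiple of `dsSol`. The second component at `m = 2N`
covers the boundary condition at `2N + 1`. -/
theorem dsExt_eq_mul_dsSol {N : ℕ} {γ : ℝ} {A : (Fin (2 * N) → ℂ) →ₗ[ℂ] (Fin (2 * N) → ℂ)}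
    (hA : ∀ (ψ : Fin (2 * N) → ℂ) (n : Fin (2 * N)),
      A ψ n = dsExt N ψ ((n : ℕ) + 2) + dsExt N ψ (n : ℕ)
        + Complex.I * γ * (-1) ^ ((n : ℕ) + 1) * ψ n)
    {μ : ℂ} {ψ : Fin (2 * N) → ℂ} (h : A ψ = μ • ψ) (m : ℕ)
    (hm : m ≤ 2 * N) :
    dsExt N ψ m = dsExt N ψ 1 * dsSol γ μ m ∧
    dsExt N ψ (m + 1) = dsExt N ψ 1 * dsSol γ μ (m + 1) := by
  induction m with
  | zero => simp [dsSol, dsExt]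
  | succ m ih =>
    obtain ⟨i1, i2⟩ := ih (by omega)
    refine ⟨i2, ?_⟩
    have e := congrFun h ⟨m, by omega⟩
    rw [hA, ← dsExt_succ N ψ ⟨m, by omega⟩] at e
    simp only [Pi.smul_apply, smul_eq_mul] at e
    rw [← dsExt_succ N ψ ⟨m, by omega⟩] at e
    simp only at e
    rw [dsSol_step]
    linear_combination e + (μ - Complex.I * γ * (-1) ^ (m + 1)) * i2 - i1

theorem apply_eq_mul_dsSol {N : ℕ} {γ : ℝ} {A : (Fin (2 * N) → ℂ) →ₗ[ℂ] (Fin (2 * N) → ℂ)}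
    (hA : ∀ (ψ : Fin (2 * N) → ℂ) (n : Fin (2 * N)),
      A ψ n = dsExt N ψ ((n : ℕ) + 2) + dsExt N ψ (n : ℕ)
        + Complex.I * γ * (-1) ^ ((n : ℕ) + 1) * ψ n)
    {μ : ℂ} {ψ : Fin (2 * N) → ℂ} (h : A ψ = μ • ψ) (n : Fin (2 * N)) :
    ψ n = dsExt N ψ 1 * dsSol γ μ ((n : ℕ) + 1) := by
  rw [← (dsExt_eq_mul_dsSol hA h n n.2.le).2, dsExt_succ]

theorem dsExt_one_ne_zero {N : ℕ} {γ : ℝ} {A : (Fin (2 * N) → ℂ) →ₗ[ℂ] (Fin (2 * N) → ℂ)}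
    (hA : ∀ (ψ : Fin (2 * N) → ℂ) (n : Fin (2 * N)),
      A ψ n = dsExt N ψ ((n : ℕ) + 2) + dsExt N ψ (n : ℕ)
        + Complex.I * γ * (-1) ^ ((n : ℕ) + 1) * ψ n)
    {μ : ℂ} {ψ : Fin (2 * N) → ℂ} (h : A ψ = μ • ψ) (h0 : ψ ≠ 0) :
    dsExt N ψ 1 ≠ 0 := by
  intro h1
  apply h0
  ext n
  simp [apply_eq_mul_dsSol hA h n, h1]

theorem eigen_iff_dsSol {N : ℕ} {γ : ℝ} {A : (Fin (2 * N) → ℂ) →ₗ[ℂ] (Fin (2 * N) → ℂ)}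
    (hA : ∀ (ψ : Fin (2 * N) → ℂ) (n : Fin (2 * N)),
      A ψ n = dsExt N ψ ((n : ℕ) + 2) + dsExt N ψ (n : ℕ)
        + Complex.I * γ * (-1) ^ ((n : ℕ) + 1) * ψ n)
    (hN : 1 ≤ N) (μ : ℂ) :
    (∃ ψ : Fin (2 * N) → ℂ, ψ ≠ 0 ∧ A ψ = μ • ψ) ↔ dsSol γ μ (2 * N + 1) = 0 := by
  constructor
  · rintro ⟨ψ, h0, h⟩
    have e := (dsExt_eq_mul_dsSol hA h (2 * N) le_rfl).2
    have z : dsExt N ψ (2 * N + 1) = 0 := by simp [dsExt]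
    rw [z] at e
    exact (mul_eq_zero.1 e.symm).resolve_left (dsExt_one_ne_zero hA h h0)
  · intro h
    have key : ∀ m ≤ 2 * N + 1,
        dsExt N (fun n : Fin (2 * N) => dsSol γ μ ((n : ℕ) + 1)) m = dsSol γ μ m := by
      intro m hm
      rcases Nat.eq_zero_or_pos m with rfl | hp
      · simp [dsExt, dsSol]
      · rcases hm.eq_or_lt with rfl | hlt
        · simp [dsExt, h]
        · simp only [dsExt]
          rw [dif_pos ⟨hp, by omega⟩, Nat.sub_add_cancel hp]
    refine ⟨fun n => dsSol γ μ ((n : ℕ) + 1), ?_, ?_⟩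
    · intro h0
      simpa [dsSol] using congrFun h0 ⟨0, by omega⟩
    · ext n
      have := n.2
      rw [hA, key _ (by omega), key _ (by omega), dsSol_step]
      simp only [Pi.smul_apply, smul_eq_mul]
      ring

/-- The discrete PT-symmetric Schrödinger operator
`(Aψ)_n = ψ_{n+1} + ψ_{n-1} + iγ(-1)^n ψ_n` (`2 ≤ n ≤ 2N-1`),
`(Aψ)_1 = ψ_2 - iγψ_1`, `(Aψ)_{2N} = ψ_{2N-1} + iγψ_{2N}` on `ℂ^{2N}` has exactly the
eigenvalues `±(4cos²(πj/(1+2N)) - γ²)^{1/2}`, `1 ≤ j ≤ N`, and if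
`|γ| < 2cos(πN/(1+2N))` then all these eigenvalues are real and simple. -/
theorem discrete_schroedinger_eigenvalues (N : ℕ) (hN : 1 ≤ N) (γ : ℝ)
    (A : (Fin (2*N) → ℂ) →ₗ[ℂ] (Fin (2*N) → ℂ))
    (hA : ∀ (ψ : Fin (2*N) → ℂ) (n : Fin (2*N)),
      A ψ n = dsExt N ψ ((n : ℕ) + 2) + dsExt N ψ (n : ℕ)
        + Complex.I * γ * (-1)^((n : ℕ) + 1) * ψ n) :
    (∀ μ : ℂ, (∃ ψ : Fin (2*N) → ℂ, ψ ≠ 0 ∧ A ψ = μ • ψ) ↔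
      ∃ j : ℕ, 1 ≤ j ∧ j ≤ N ∧ (μ = dsEig N γ j ∨ μ = -dsEig N γ j)) ∧
    (|γ| < 2 * Real.cos (π * N / (1 + 2*N)) →
      ∀ μ : ℂ, (∃ ψ : Fin (2*N) → ℂ, ψ ≠ 0 ∧ A ψ = μ • ψ) →
        μ.im = 0 ∧
        ∀ ψ φ : Fin (2*N) → ℂ, ψ ≠ 0 → A ψ = μ • ψ → A φ = μ • φ → ∃ c : ℂ, φ = c • ψ) := by
  have hev : ∀ μ : ℂ, (∃ ψ : Fin (2 * N) → ℂ, ψ ≠ 0 ∧ A ψ = μ • ψ) ↔ ∃ j : ℕ, 1 ≤ j ∧ j ≤ N ∧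
      μ ^ 2 = ((4 * Real.cos (π * j / (1 + 2 * N)) ^ 2 - γ ^ 2 : ℝ) : ℂ) := fun μ =>
    (eigen_iff_dsSol hA hN μ).trans (dsSol_eq_zero_iff N γ μ)
  refine ⟨fun μ => ?_, fun hγ μ hμ => ⟨?_, ?_⟩⟩
  · rw [hev]
    have hsq : ∀ j, dsEig N γ j ^ 2
        = ((4 * Real.cos (π * j / (1 + 2 * N)) ^ 2 - γ ^ 2 : ℝ) : ℂ) := by
      intro j
      rw [dsEig, ← Complex.cpow_nat_mul]
      norm_num
    simp only [← hsq, sq_eq_sq_iff_eq_or_eq_neg]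
  · obtain ⟨j, hj1, hjN, h⟩ := (hev μ).1 hμ
    have hj' : (j : ℝ) ≤ N := by exact_mod_cast hjN
    have hcos : Real.cos (π * N / (1 + 2 * N)) ≤ Real.cos (π * j / (1 + 2 * N)) := by
      apply Real.cos_le_cos_of_nonneg_of_le_pi (by positivity)
      · rw [div_le_iff₀ (by positivity)]
        nlinarith [Real.pi_pos, (Nat.cast_nonneg N : (0 : ℝ) ≤ N)]
      · gcongr
    have hpos : 0 < 4 * Real.cos (π * j / (1 + 2 * N)) ^ 2 - γ ^ 2 := by
      have : γ ^ 2 < (2 * Real.cos (π * j / (1 + 2 * N))) ^ 2 :=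
        sq_lt_sq' (by linarith [neg_abs_le γ]) (by linarith [le_abs_self γ])
      linarith
    have hre := congrArg Complex.re h
    have him := congrArg Complex.im h
    rw [Complex.ofReal_re] at hre
    rw [Complex.ofReal_im] at him
    simp only [sq μ, Complex.mul_re, Complex.mul_im] at hre him
    by_contra hne
    -- The imaginary part of `μ²` forces `re μ = 0`, and then `μ² = -(im μ)²` is negative.
    have hr : μ.re = 0 := by
      have : μ.re * μ.im = 0 := by linarith
      exact (mul_eq_zero.1 this).resolve_right hne
    rw [hr] at hre
    nlinarith [mul_self_nonneg μ.im]
  · intro ψ φ h0 hψ hφ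
    refine ⟨dsExt N φ 1 / dsExt N ψ 1, ?_⟩
    ext n
    have h1 := dsExt_one_ne_zero hA hψ h0
    rw [Pi.smul_apply, smul_eq_mul, apply_eq_mul_dsSol hA hψ n, apply_eq_mul_dsSol hA hφ n]
    field_simp
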